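/- Let m be a fixed natural number. Then, as ℓ → ∞ (with ℓ ≥ m), the ratio [ (2ℓ+1) · Γ(ℓ+1/2)² · Γ(2ℓ + 3/2) / ((ℓ+m)!·(ℓ−m)!) ] / [ 2·√(2π) · e^{−2ℓ} · (2ℓ)^{2ℓ+1} ] tends to 1. -/

import Mathlib

open scoped Nat
open Filter

lemma aux_gamma (n : ℕ) (hn : n ≠ 0) :
    Real.Gamma ((n : ℝ) + 1 / 2) =
      (√Real.pi * Stirling.stirlingSeq (2 * n) / Stirling.stirlingSeq n ^ 2) * (n ! : ℝ) / √(n : ℝ) := by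
  have h := Real.Gamma_mul_Gamma_add_half ((n : ℝ) + 1 / 2)
  have e1 : (n : ℝ) + 1 / 2 + 1 / 2 = n + 1 := by ring
  have e2 : 2 * ((n : ℝ) + 1 / 2) = ((2 * n : ℕ) : ℝ) + 1 := by push_cast; ring
  have e3 : (1 : ℝ) - (((2 * n : ℕ) : ℝ) + 1) = -((2 * n : ℕ) : ℝ) := by ring
  rw [e1, e2, e3, Real.Gamma_nat_eq_factorial, Real.Gamma_nat_eq_factorial,
    Real.rpow_neg (by norm_num), Real.rpow_natCast] at h
  have hp : (0 : ℝ) < n := by positivity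
  have hf : (0 : ℝ) < n ! := by positivity
  rw [← eq_div_iff hf.ne'] at h
  rw [h, Stirling.stirlingSeq, Stirling.stirlingSeq]
  have e4 : √(2 * ((2 * n : ℕ) : ℝ)) = 2 * √(n : ℝ) := by
    rw [show 2 * ((2 * n : ℕ) : ℝ) = 2 ^ 2 * n by push_cast; ring, Real.sqrt_mul (by norm_num),
      Real.sqrt_sq (by norm_num)]
  have e5 : √(2 * (n : ℝ)) ^ 2 = 2 * n := Real.sq_sqrt (by positivity)
  have e6 : √(n : ℝ) ^ 2 = n := Real.sq_sqrt (by positivity)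
  rw [e4, div_pow (n ! : ℝ), mul_pow, e5, ← pow_mul, mul_comm n 2]
  have hs : 0 < √(n : ℝ) := by positivity
  push_cast
  rw [mul_div_assoc 2 (n : ℝ), mul_pow 2 ((n : ℝ) / _)]
  have hq : 0 < ((n : ℝ) / Real.exp 1) ^ (2 * n) := by positivity
  generalize ((n : ℝ) / Real.exp 1) ^ (2 * n) = q at *
  generalize √(n : ℝ) = s at *
  rw [← e6]
  field_simp

lemma aux_A : Tendsto (fun n : ℕ =>
    √Real.pi * Stirling.stirlingSeq (2 * n) / Stirling.stirlingSeq n ^ 2) atTop (nhds 1) := by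
  have h := Stirling.tendsto_stirlingSeq_sqrt_pi
  have h2 : Tendsto (fun n : ℕ => 2 * n) atTop atTop :=
    tendsto_id.const_mul_atTop' (by norm_num)
  have hpi : 0 < √Real.pi := Real.sqrt_pos.2 Real.pi_pos
  have := ((h.comp h2).const_mul (√Real.pi)).div (h.pow 2) (by positivity)
  convert! this using 2
  field_simp

lemma aux_lin (a b : ℝ) : Tendsto (fun n : ℕ => ((n : ℝ) + a) / (n + b)) atTop (nhds 1) := by
  have := tendsto_add_mul_div_add_mul_atTop_nhds (𝕜 := ℝ) a b 1 (d := 1) one_ne_zero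
  simpa [add_comm] using this

lemma aux_B (m : ℕ) : Tendsto (fun ℓ : ℕ =>
    (ℓ ! : ℝ) ^ 2 / (((ℓ + m)! : ℝ) * ((ℓ - m)! : ℝ))) atTop (nhds 1) := by
  induction m with
  | zero =>
    refine tendsto_const_nhds.congr fun ℓ => ?_
    have : (0 : ℝ) < ℓ ! := by positivity
    simp only [add_zero, Nat.sub_zero]
    field_simp
  | succ m ih =>
    have := ih.mul (aux_lin (-m) (m + 1))
    rw [mul_one] at this
    refine this.congr' ?_
    filter_upwards [eventually_gt_atTop m] with ℓ hℓ
    obtain ⟨k, rfl⟩ := Nat.exists_eq_add_of_lt hℓ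
    rw [show m + k + 1 - m = k + 1 by lia, show m + k + 1 - (m + 1) = k by lia,
      show m + k + 1 + (m + 1) = (m + k + 1 + m) + 1 by lia, Nat.factorial_succ k,
      Nat.factorial_succ (m + k + 1 + m)]
    have h1 : (0 : ℝ) < k ! := by positivity
    have h2 : (0 : ℝ) < (m + k + 1 + m)! := by positivity
    have h3 : (0 : ℝ) < (m : ℝ) + k + 1 + m + 1 := by positivity
    have h4 : (0 : ℝ) < (k : ℝ) + 1 := by positivity
    push_cast
    rw [show (m : ℝ) + k + 1 + -m = k + 1 by ring,
      show (m : ℝ) + k + 1 + (m + 1) = m + k + 1 + m + 1 by ring]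
    field_simp

/-- For fixed `m`, as `ℓ → ∞`,
`(2ℓ+1) Γ(ℓ+1/2)² Γ(2ℓ+3/2) / ((ℓ+m)!(ℓ−m)!) ∼ 2 √(2π) e^{−2ℓ} (2ℓ)^{2ℓ+1}`
(Stirling-type asymptotics from the proof of Lemma 5.4 of the paper). -/
theorem gamma_factorial_ratio_tendsto_one (m : ℕ) :
    Tendsto (fun ℓ : ℕ =>
      ((2 * (ℓ : ℝ) + 1) * Real.Gamma ((ℓ : ℝ) + 1 / 2) ^ 2 *
          Real.Gamma (2 * (ℓ : ℝ) + 3 / 2) / (((ℓ + m)! : ℝ) * ((ℓ - m)! : ℝ))) /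
        (2 * Real.sqrt (2 * Real.pi) * Real.exp (-(2 * (ℓ : ℝ))) *
          (2 * (ℓ : ℝ)) ^ (2 * ℓ + 1)))
      atTop (nhds 1) := by
  have h2 : Tendsto (fun n : ℕ => 2 * n) atTop atTop :=
    tendsto_id.const_mul_atTop' (by norm_num)
  have hpi : 0 < √Real.pi := Real.sqrt_pos.2 Real.pi_pos
  have hS := ((Stirling.tendsto_stirlingSeq_sqrt_pi.comp h2).div_const (√Real.pi))
  rw [div_self hpi.ne'] at hS
  have key := (((((aux_A.pow 2).mul (aux_A.comp h2)).mul (aux_B m)).mul hS).mul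
    ((aux_lin 1 0).comp h2)).mul ((aux_lin (1/2) 0).comp h2)
  simp only [one_pow, mul_one] at key
  refine key.congr' ?_
  filter_upwards [eventually_gt_atTop 0] with ℓ hℓ
  have g2 := aux_gamma (2 * ℓ) (by lia)
  have e1 : 2 * (ℓ : ℝ) + 3 / 2 = (((2 * ℓ : ℕ) : ℝ) + 1 / 2) + 1 := by push_cast; ring
  rw [e1, Real.Gamma_add_one (by positivity), g2, aux_gamma ℓ (by lia)]
  simp only [Function.comp]
  generalize √Real.pi * Stirling.stirlingSeq (2 * (2 * ℓ)) / Stirling.stirlingSeq (2 * ℓ) ^ 2 = A2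
  generalize √Real.pi * Stirling.stirlingSeq (2 * ℓ) / Stirling.stirlingSeq ℓ ^ 2 = A1
  have hp : (0 : ℝ) < ℓ := by positivity
  rw [Stirling.stirlingSeq, Real.sqrt_mul (by norm_num) Real.pi,
    Real.sqrt_mul (by norm_num) ((2 * ℓ : ℕ) : ℝ), div_pow (((2 * ℓ : ℕ) : ℝ)), ← Real.exp_nat_mul,
    Real.exp_neg, div_pow, mul_pow, Real.sq_sqrt hp.le]
  have e7 : √((2 * ℓ : ℕ) : ℝ) ^ 2 = 2 * ℓ := by
    rw [Real.sq_sqrt (by positivity)]; push_cast; ring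
  have hs : 0 < √((2 * ℓ : ℕ) : ℝ) := Real.sqrt_pos.2 (by positivity)
  have h2' : 0 < √(2 : ℝ) := by positivity
  have hf1 : (0 : ℝ) < (ℓ + m)! := by positivity
  have hf2 : (0 : ℝ) < (ℓ - m)! := by positivity
  generalize √((2 * ℓ : ℕ) : ℝ) = s at *
  rw [pow_succ (2 * (ℓ : ℝ)) (2 * ℓ)]
  push_cast
  rw [mul_one, add_zero]
  have hq : 0 < (2 * (ℓ : ℝ)) ^ (2 * ℓ) := by positivity
  generalize (2 * (ℓ : ℝ)) ^ (2 * ℓ) = q at *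
  field_simp
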